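/- Let K be a field of characteristic zero and Ω a commutative semigroup. Let Exp be the mould on Ω defined by Exp^∅ = 1 and Exp^w = 1/r! for every word w of length r ≥ 1. If Se is a symétrel mould on Ω then the composed mould Se ∘ Exp is symétral, and if E is an alternel mould on Ω then E ∘ Exp is alternal. -/

import Mathlib

namespace Moulds

variable {X : Type*} {K : Type*}

/-- The multiset of shuffles (interleavings) of two words, counted with multiplicity. -/
def shuffles : List X → List X → Multiset (List X)
  | [], v => {v}
  | a :: u, [] => {a :: u}
  | a :: u, b :: v =>
      (shuffles u (b :: v)).map (a :: ·) + (shuffles (a :: u) v).map (b :: ·)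
termination_by u v => u.length + v.length

/-- The multiset of contracting shuffles of two words: interleavings in which any
pair of adjacent letters coming one from each word may be contracted to their sum. -/
def cshuffles [Add X] : List X → List X → Multiset (List X)
  | [], v => {v}
  | a :: u, [] => {a :: u}
  | a :: u, b :: v =>
      (cshuffles u (b :: v)).map (a :: ·) + (cshuffles (a :: u) v).map (b :: ·)
        + (cshuffles u v).map ((a + b) :: ·)
termination_by u v => u.length + v.length

/-- Shuffle sum Σ_{w ∈ sh(u,v)} M^w (with multiplicity). -/
def shuffleSum [AddCommMonoid K] (M : List X → K) (u v : List X) : K :=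
  ((shuffles u v).map M).sum

/-- Contracting shuffle sum Σ_{w ∈ csh(u,v)} M^w (with multiplicity). -/
def cshuffleSum [Add X] [AddCommMonoid K] (M : List X → K) (u v : List X) : K :=
  ((cshuffles u v).map M).sum

/-- A mould is alternal if it vanishes on ∅ and all its nontrivial shuffle sums vanish. -/
def Alternal [AddCommMonoid K] (M : List X → K) : Prop :=
  M [] = 0 ∧ ∀ u v : List X, u ≠ [] → v ≠ [] → shuffleSum M u v = 0

/-- A mould is symétral if M^∅ = 1 and shuffle sums multiply. -/
def Symetral [CommRing K] (M : List X → K) : Prop :=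
  M [] = 1 ∧ ∀ u v : List X, shuffleSum M u v = M u * M v

/-- A mould is alternel if it vanishes on ∅ and all its nontrivial contracting
shuffle sums vanish. -/
def Alternel [Add X] [AddCommMonoid K] (M : List X → K) : Prop :=
  M [] = 0 ∧ ∀ u v : List X, u ≠ [] → v ≠ [] → cshuffleSum M u v = 0

/-- A mould is symétrel if M^∅ = 1 and contracting shuffle sums multiply. -/
def Symetrel [Add X] [CommRing K] (M : List X → K) : Prop :=
  M [] = 1 ∧ ∀ u v : List X, cshuffleSum M u v = M u * M v

/-- Mould multiplication: (M × N)^w = Σ_{w = w¹w²} M^{w¹} N^{w²}. -/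
def mmul [CommRing K] (M N : List X → K) : List X → K :=
  fun w => ∑ i ∈ Finset.range (w.length + 1), M (w.take i) * N (w.drop i)

/-- The unit mould 1^•, equal to 1 on the empty word and 0 elsewhere. -/
def mone [One K] [Zero K] : List X → K :=
  fun w => match w with | [] => 1 | _ => 0

/-- The mould I^•, equal to 1 on one-letter words and 0 elsewhere. -/
def mId [One K] [Zero K] : List X → K :=
  fun w => if w.length = 1 then 1 else 0

/-- All factorizations of a word into nonempty consecutive blocks; a block is
recorded as (first letter, rest of the block). -/
def splits : List X → List (List (X × List X))
  | [] => [[]]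
  | a :: t =>
      (splits t).flatMap fun p =>
        match p with
        | [] => [[(a, ([] : List X))]]
        | (b, r) :: ps => [(a, b :: r) :: ps, (a, ([] : List X)) :: (b, r) :: ps]

/-- The sum ‖·‖ of the letters of a (nonempty) block. -/
def blockSum [Add X] (b : X × List X) : X := b.2.foldl (· + ·) b.1

/-- Mould composition:
(M ∘ N)^w = Σ_{w = w¹⋯wˢ, wⁱ ≠ ∅} M^{(‖w¹‖,…,‖wˢ‖)} N^{w¹} ⋯ N^{wˢ}. -/
def mcomp [Add X] [CommRing K] (M N : List X → K) : List X → K :=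
  fun w => ((splits w).map
    (fun p => M (p.map blockSum) * (p.map (fun b => N (b.1 :: b.2))).prod)).sum

/-- The monomial series associated to a word. -/
def mono [DecidableEq X] [One K] [Zero K] (w : List X) : List X → K :=
  fun w' => if w' = w then 1 else 0

end Moulds

namespace Moulds

/- STATEMENT 19: Over a field K of characteristic zero and a commutative semigroup Ω,
let Exp be the mould Exp^∅ = 1, Exp^w = 1/r! for words of length r ≥ 1.  If Se is
symétrel then Se ∘ Exp is symétral, and if E is alternel then E ∘ Exp is alternal. -/

variable {Ω : Type*} [AddCommSemigroup Ω] {K : Type*} [Field K] [CharZero K]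

/-- The exponential mould Exp^w = 1/(length w)!; in particular Exp^∅ = 1. -/
noncomputable def ExpMould (Ω : Type*) (K : Type*) [Field K] : List Ω → K :=
  fun w => ((w.length).factorial : K)⁻¹

/-!
Only the symétrality of `Exp` matters: composing with any symétral mould `N` turns contracting
shuffle sums into shuffle sums. More precisely, the shuffle sum of `M ∘ N` over `u, v` is the
sum of `N^{u¹} ⋯ N^{uˢ} N^{v¹} ⋯ N^{vᵗ} S` over all factorizations of `u` and `v`, where `S` is the
contracting shuffle sum of `M` over `(‖u¹‖, …, ‖uˢ‖)` and `(‖v¹‖, …, ‖vᵗ‖)`. This is proved by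
induction on the first block of a factorization of a shuffle of `u` and `v`: such a block is a
shuffle of a prefix `u₁` of `u` with a prefix `v₁` of `v`, all these shuffles have the same letter
sum `‖u₁ v₁‖`, and their weights `N` add up to `N^{u₁} N^{v₁}`. The contracted letters
`‖u₁‖ + ‖v₁‖` come from the blocks with both prefixes nonempty.
-/

section DeconcatSum

variable {X Y A R : Type*} [AddCommMonoid A] [NonUnitalNonAssocSemiring R]

/-- The sum `∑ f x y` over all ways `w = x ++ y` of cutting the word `w` in two, the empty pieces
included. As in `mmul`, the cuts are indexed by the length of the first piece. -/
def deconcatSum (f : List X → List X → A) (w : List X) : A :=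
  ∑ i ∈ Finset.range (w.length + 1), f (w.take i) (w.drop i)

theorem deconcatSum_nil (f : List X → List X → A) : deconcatSum f [] = f [] [] := by
  simp [deconcatSum]

theorem deconcatSum_cons (f : List X → List X → A) (a : X) (w : List X) :
    deconcatSum f (a :: w) = f [] (a :: w) + deconcatSum (fun x y => f (a :: x) y) w := by
  rw [deconcatSum, List.length_cons, Finset.sum_range_succ', add_comm]
  rfl

theorem deconcatSum_congr {f g : List X → List X → A} {w : List X}
    (h : ∀ x y, x ++ y = w → f x y = g x y) : deconcatSum f w = deconcatSum g w :=
  Finset.sum_congr rfl fun i _ => h _ _ (w.take_append_drop i)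

theorem deconcatSum_zero (w : List X) : deconcatSum (fun _ _ => (0 : A)) w = 0 :=
  Finset.sum_const_zero

theorem deconcatSum_add (f g : List X → List X → A) (w : List X) :
    deconcatSum (fun x y => f x y + g x y) w = deconcatSum f w + deconcatSum g w :=
  Finset.sum_add_distrib

theorem mul_deconcatSum (c : R) (f : List X → List X → R) (w : List X) :
    c * deconcatSum f w = deconcatSum (fun x y => c * f x y) w :=
  Finset.mul_sum _ _ _

theorem deconcatSum_comm (f : List X → List X → List Y → List Y → A) (u : List X) (v : List Y) :
    deconcatSum (fun x y => deconcatSum (f x y) v) u =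
      deconcatSum (fun x' y' => deconcatSum (fun x y => f x y x' y') u) v :=
  Finset.sum_comm

end DeconcatSum

section Shuffle

variable {X A R : Type*} [AddCommMonoid A] [NonUnitalNonAssocSemiring R]

theorem perm_append_of_mem_shuffles {u v w : List X} (hw : w ∈ shuffles u v) :
    w.Perm (u ++ v) := by
  induction u, v using shuffles.induct generalizing w with
  | case1 v => simp_all [shuffles]
  | case2 a u => simp_all [shuffles]
  | case3 a u b v ihu ihv =>
    simp only [shuffles, Multiset.mem_add, Multiset.mem_map] at hw
    rcases hw with ⟨w, hw, rfl⟩ | ⟨w, hw, rfl⟩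
    · exact (ihu hw).cons a
    · exact ((ihv hw).cons b).trans List.perm_middle.symm

theorem card_shuffles (u v : List X) :
    (shuffles u v).card = (u.length + v.length).choose u.length := by
  induction u, v using shuffles.induct with
  | case1 v => simp [shuffles]
  | case2 a u => simp [shuffles]
  | case3 a u b v ihu ihv =>
    rw [shuffles, Multiset.card_add, Multiset.card_map, Multiset.card_map, ihu, ihv]
    simp only [List.length_cons, ← add_assoc, add_right_comm u.length 1, Nat.choose_succ_succ']

theorem shuffleSum_nil_left (M : List X → A) (v : List X) : shuffleSum M [] v = M v := by
  simp [shuffleSum, shuffles]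

theorem shuffleSum_nil_right (M : List X → A) (u : List X) : shuffleSum M u [] = M u := by
  cases u <;> simp [shuffleSum, shuffles]

theorem shuffleSum_cons_cons (M : List X → A) (a b : X) (u v : List X) :
    shuffleSum M (a :: u) (b :: v) =
      shuffleSum (fun w => M (a :: w)) u (b :: v) +
        shuffleSum (fun w => M (b :: w)) (a :: u) v := by
  simp [shuffleSum, shuffles]

theorem shuffleSum_zero (u v : List X) : shuffleSum (0 : List X → A) u v = 0 := by
  simp [shuffleSum]

theorem shuffleSum_add (M N : List X → A) (u v : List X) :
    shuffleSum (fun w => M w + N w) u v = shuffleSum M u v + shuffleSum N u v :=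
  Multiset.sum_map_add

theorem shuffleSum_const_mul (c : R) (M : List X → R) (u v : List X) :
    shuffleSum (fun w => c * M w) u v = c * shuffleSum M u v :=
  Multiset.sum_map_mul_left

theorem shuffleSum_mul_of_perm_invariant (N : List X → R) {f : List X → R}
    (hf : ∀ {x y : List X}, x.Perm y → f x = f y) (u v : List X) :
    shuffleSum (fun w => N w * f w) u v = shuffleSum N u v * f (u ++ v) := by
  rw [shuffleSum, shuffleSum, ← Multiset.sum_map_mul_right]
  exact congrArg _ <| Multiset.map_congr rfl fun w hw => by
    rw [hf (perm_append_of_mem_shuffles hw)]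

-- Deconcatenation is a morphism for the shuffle product.
theorem shuffleSum_deconcatSum (f : List X → List X → A) (u v : List X) :
    shuffleSum (deconcatSum f) u v =
      deconcatSum (fun u₁ u₂ => deconcatSum (fun v₁ v₂ =>
        shuffleSum (fun x => shuffleSum (f x) u₂ v₂) u₁ v₁) v) u := by
  induction u, v using shuffles.induct generalizing f with
  | case1 v => simp only [deconcatSum_nil, shuffleSum_nil_left]
  | case2 a u => simp only [deconcatSum_nil, shuffleSum_nil_right]
  | case3 a u b v ihu ihv =>
    rw [shuffleSum_cons_cons]
    simp only [deconcatSum_cons, shuffleSum_add, ihu, ihv]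
    simp only [deconcatSum_add, shuffleSum_nil_left, shuffleSum_nil_right,
      shuffleSum_cons_cons]
    abel

variable [Add X]

theorem cshuffleSum_nil_left (M : List X → A) : cshuffleSum M [] = M := by
  ext v
  simp [cshuffleSum, cshuffles]

theorem cshuffleSum_nil_right (M : List X → A) (u : List X) : cshuffleSum M u [] = M u := by
  cases u <;> simp [cshuffleSum, cshuffles]

theorem cshuffleSum_cons_cons (M : List X → A) (a b : X) (u v : List X) :
    cshuffleSum M (a :: u) (b :: v) =
      cshuffleSum (fun w => M (a :: w)) u (b :: v) +
        cshuffleSum (fun w => M (b :: w)) (a :: u) v +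
        cshuffleSum (fun w => M ((a + b) :: w)) u v := by
  simp [cshuffleSum, cshuffles]

theorem cshuffleSum_zero : cshuffleSum (0 : List X → A) = 0 := by
  ext u v
  simp [cshuffleSum]

end Shuffle

section Composition

variable {X R : Type*} [CommRing R]

theorem blockSum_append [AddSemigroup X] (a b : X) (x y : List X) :
    blockSum (a, x ++ b :: y) = blockSum (a, x) + blockSum (b, y) := by
  simp [blockSum, List.foldl_assoc]

theorem sum_splits_cons {A : Type*} [AddCommMonoid A] (F : List (X × List X) → A) (a : X)
    (w : List X) :
    ((splits (a :: w)).map F).sum =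
      deconcatSum (fun x y => ((splits y).map fun p => F ((a, x) :: p)).sum) w := by
  induction w generalizing F a with
  | nil => simp [splits, deconcatSum_nil]
  | cons b w ih =>
    rw [splits, List.map_flatMap, List.flatMap, List.sum_flatten, List.map_map, ih]
    simp [deconcatSum_cons, ih, List.sum_map_add, deconcatSum_add, add_comm]

variable [Add X]

theorem mcomp_nil (M N : List X → R) : mcomp M N [] = M [] := by
  simp [mcomp, splits]

theorem mcomp_zero (N : List X → R) : mcomp (0 : List X → R) N = 0 := by
  ext w
  simp [mcomp]

theorem mcomp_add (M M' N : List X → R) (w : List X) :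
    mcomp (fun s => M s + M' s) N w = mcomp M N w + mcomp M' N w := by
  simp only [mcomp, add_mul, List.sum_map_add]

theorem mcomp_const_mul (c : R) (M N : List X → R) (w : List X) :
    mcomp (fun s => c * M s) N w = c * mcomp M N w := by
  simp only [mcomp, mul_assoc, List.sum_map_mul_left]

theorem mcomp_deconcatSum {Y : Type*} (M : List Y → List Y → List X → R) (N : List X → R)
    (v : List Y) (w : List X) :
    mcomp (fun s => deconcatSum (fun x y => M x y s) v) N w =
      deconcatSum (fun x y => mcomp (M x y) N w) v := by
  simp only [mcomp, deconcatSum, Finset.sum_mul]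
  exact Multiset.sum_map_sum (m := (splits w : Multiset (List (X × List X))))

theorem mcomp_cons (M N : List X → R) (a : X) (w : List X) :
    mcomp M N (a :: w) =
      deconcatSum (fun x y => N (a :: x) * mcomp (fun s => M (blockSum (a, x) :: s)) N y) w := by
  simp only [mcomp, sum_splits_cons, List.map_cons, List.prod_cons, ← List.sum_map_mul_left,
    mul_left_comm]

/-- The mould `s ↦ M (‖x‖ :: s)` obtained from `M` by fixing the block `x` as first letter. It is
zero when `x` is empty, since an empty word is not a block. -/
def prependBlock (M : List X → R) : List X → List X → R
  | [], _ => 0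
  | a :: x, s => M (blockSum (a, x) :: s)

theorem prependBlock_nil (M : List X → R) : prependBlock M [] = 0 := rfl

theorem prependBlock_cons (M : List X → R) (a : X) (x : List X) :
    prependBlock M (a :: x) = fun s => M (blockSum (a, x) :: s) := rfl

theorem mcomp_cons_eq_deconcatSum_prependBlock (M N : List X → R) (a : X) (w : List X) :
    mcomp M N (a :: w) =
      deconcatSum (fun x y => N x * mcomp (prependBlock M x) N y) (a :: w) := by
  simp only [deconcatSum_cons, prependBlock_nil, mcomp_zero, Pi.zero_apply, mul_zero, zero_add]
  exact mcomp_cons M N a w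

/-- The composition of a function `B` of two words with the mould `N` in both arguments. For
`B = cshuffleSum M` it sums the contracting shuffle sums of `M` over the factorizations of both. -/
def mcomp₂ (B : List X → List X → R) (N : List X → R) (u v : List X) : R :=
  mcomp (fun s => mcomp (B s) N v) N u

theorem mcomp₂_zero (N : List X → R) (u v : List X) :
    mcomp₂ (0 : List X → List X → R) N u v = 0 := by
  simp only [mcomp₂, Pi.zero_apply, mcomp_zero]
  exact congrFun (mcomp_zero N) u

theorem mcomp₂_add (B C : List X → List X → R) (N : List X → R) (u v : List X) :
    mcomp₂ (fun s t => B s t + C s t) N u v = mcomp₂ B N u v + mcomp₂ C N u v := by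
  simp only [mcomp₂, mcomp_add]

theorem mcomp₂_mul (M M' N : List X → R) (u v : List X) :
    mcomp₂ (fun s t => M s * M' t) N u v = mcomp M N u * mcomp M' N v := by
  simp only [mcomp₂, mcomp_const_mul, mul_comm _ (mcomp M' N v)]

theorem mcomp₂_cons_left (B : List X → List X → R) (N : List X → R) (a : X) (u v : List X) :
    mcomp₂ B N (a :: u) v =
      deconcatSum (fun x y =>
        N (a :: x) * mcomp₂ (fun s => B (blockSum (a, x) :: s)) N y v) u :=
  mcomp_cons _ N a u

theorem mcomp₂_cons_right (B : List X → List X → R) (N : List X → R) (u : List X) (b : X)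
    (v : List X) :
    mcomp₂ B N u (b :: v) =
      deconcatSum (fun x y =>
        N (b :: x) * mcomp₂ (fun s t => B s (blockSum (b, x) :: t)) N u y) v := by
  simp only [mcomp₂, mcomp_cons _ N b v, mcomp_deconcatSum, mcomp_const_mul]

theorem mcomp₂_eq_zero {B : List X → List X → R}
    (hB : ∀ s t, s ≠ [] → t ≠ [] → B s t = 0) (N : List X → R) {u v : List X}
    (hu : u ≠ []) (hv : v ≠ []) : mcomp₂ B N u v = 0 := by
  obtain ⟨a, u, rfl⟩ := List.exists_cons_of_ne_nil hu
  obtain ⟨b, v, rfl⟩ := List.exists_cons_of_ne_nil hv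
  have hB_cons (c d : X) : (fun s t => B (c :: s) (d :: t)) = 0 :=
    funext₂ fun s t => hB _ _ (List.cons_ne_nil c s) (List.cons_ne_nil d t)
  simp only [mcomp₂_cons_left, mcomp₂_cons_right, hB_cons, mcomp₂_zero, mul_zero,
    deconcatSum_zero]

end Composition

section SymetralComposition

variable {X R : Type*} [CommRing R]

-- The first letter of a contracting shuffle of factorizations of `u` and `v` is the sum of a block
-- of `u`, of a block of `v`, or of one block of each; these are the terms with only `u₁`, only
-- `v₁`, or both nonempty, and `N [] = 1` gives all three the same weight `N u₁ * N v₁`.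
theorem mcomp₂_cshuffleSum_cons_cons [AddSemigroup X] (M : List X → R) {N : List X → R}
    (hN : N [] = 1) (a b : X) (u v : List X) :
    mcomp₂ (cshuffleSum M) N (a :: u) (b :: v) =
      deconcatSum (fun u₁ u₂ => deconcatSum (fun v₁ v₂ =>
        N u₁ * N v₁ * mcomp₂ (cshuffleSum (prependBlock M (u₁ ++ v₁))) N u₂ v₂)
          (b :: v)) (a :: u) := by
  simp only [deconcatSum_cons, List.nil_append, List.append_nil, List.cons_append,
    prependBlock_nil, cshuffleSum_zero, mcomp₂_zero, hN, mul_zero, zero_add, one_mul, mul_one]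
  simp only [mcomp₂_cons_left _ _ a u, mcomp₂_cons_right _ _ _ b v, prependBlock_cons,
    blockSum_append, cshuffleSum_cons_cons, mcomp₂_add, mul_add, deconcatSum_add,
    mul_deconcatSum, mul_assoc]
  rw [deconcatSum_comm _ v u]
  simp only [mul_left_comm (N (b :: _)) (N (a :: _))]
  abel

variable [AddCommSemigroup X]

theorem prependBlock_eq_of_perm (M : List X → R) {x y : List X} (h : x.Perm y) :
    prependBlock M x = prependBlock M y := by
  induction h with
  | nil => rfl
  | cons a h => simp [funext_iff, prependBlock, blockSum, h.foldl_eq]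
  | swap a b l => simp [funext_iff, prependBlock, blockSum, add_comm a b]
  | trans _ _ ih₁ ih₂ => exact ih₁.trans ih₂

theorem Symetral.shuffleSum_mcomp_cons_cons {N : List X → R} (hN : Symetral N) (M : List X → R)
    (a b : X) (u v : List X) :
    shuffleSum (mcomp M N) (a :: u) (b :: v) =
      deconcatSum (fun u₁ u₂ => deconcatSum (fun v₁ v₂ =>
        N u₁ * N v₁ * shuffleSum (mcomp (prependBlock M (u₁ ++ v₁)) N) u₂ v₂)
          (b :: v)) (a :: u) := calc
  shuffleSum (mcomp M N) (a :: u) (b :: v)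
    = shuffleSum (deconcatSum fun x y => N x * mcomp (prependBlock M x) N y)
        (a :: u) (b :: v) := by
      simp only [shuffleSum_cons_cons, mcomp_cons_eq_deconcatSum_prependBlock]
  _ = deconcatSum (fun u₁ u₂ => deconcatSum (fun v₁ v₂ =>
        shuffleSum (fun x => N x * shuffleSum (mcomp (prependBlock M x) N) u₂ v₂) u₁ v₁)
          (b :: v)) (a :: u) := by
      simp only [shuffleSum_deconcatSum, shuffleSum_const_mul]
  _ = deconcatSum (fun u₁ u₂ => deconcatSum (fun v₁ v₂ =>
        N u₁ * N v₁ * shuffleSum (mcomp (prependBlock M (u₁ ++ v₁)) N) u₂ v₂)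
          (b :: v)) (a :: u) :=
      deconcatSum_congr fun u₁ u₂ _ => deconcatSum_congr fun v₁ v₂ _ => by
        rw [shuffleSum_mul_of_perm_invariant N
          (fun h => by rw [prependBlock_eq_of_perm M h]), hN.2]

theorem Symetral.shuffleSum_mcomp {N : List X → R} (hN : Symetral N) (M : List X → R) :
    ∀ u v, shuffleSum (mcomp M N) u v = mcomp₂ (cshuffleSum M) N u v
  | [], v => by simp only [shuffleSum_nil_left, mcomp₂, mcomp_nil, cshuffleSum_nil_left]
  | a :: u, [] => by
    simp only [shuffleSum_nil_right, mcomp₂, mcomp_nil, cshuffleSum_nil_right]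
  | a :: u, b :: v => by
    rw [hN.shuffleSum_mcomp_cons_cons, mcomp₂_cshuffleSum_cons_cons M hN.1]
    refine deconcatSum_congr fun u₁ u₂ hu => deconcatSum_congr fun v₁ v₂ hv => ?_
    rcases h : u₁ ++ v₁ with _ | ⟨c, x⟩
    · simp only [prependBlock_nil, mcomp_zero, shuffleSum_zero, cshuffleSum_zero, mcomp₂_zero]
    · have : u₂.length + v₂.length < (a :: u).length + (b :: v).length := by
        have := congrArg List.length h
        simp only [← hu, ← hv, List.length_append, List.length_cons] at *
        omega
      rw [hN.shuffleSum_mcomp]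
termination_by u v => u.length + v.length

theorem duality_via_exp_mould_general {N : List X → R} (hN : Symetral N) :
    (∀ Se : List X → R, Symetrel Se → Symetral (mcomp Se N)) ∧
    (∀ E : List X → R, Alternel E → Alternal (mcomp E N)) := by
  refine ⟨fun Se hSe => ⟨(mcomp_nil Se N).trans hSe.1, fun u v => ?_⟩,
    fun E hE => ⟨(mcomp_nil E N).trans hE.1, fun u v hu hv => ?_⟩⟩
  · rw [hN.shuffleSum_mcomp, funext₂ hSe.2, mcomp₂_mul]
  · rw [hN.shuffleSum_mcomp, mcomp₂_eq_zero hE.2 N hu hv]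

end SymetralComposition

theorem symetral_expMould (X : Type*) : Symetral (ExpMould X K) := by
  refine ⟨by simp [ExpMould], fun u v => ?_⟩
  have hconst : ∀ w ∈ shuffles u v, ExpMould X K w = ((u.length + v.length).factorial : K)⁻¹ :=
    fun w hw => by
      rw [ExpMould, (perm_append_of_mem_shuffles hw).length_eq, List.length_append]
  rw [shuffleSum, Multiset.map_congr rfl hconst, Multiset.map_const', Multiset.sum_replicate,
    card_shuffles, nsmul_eq_mul, Nat.cast_add_choose, ExpMould, ExpMould]
  have := Nat.factorial_ne_zero (u.length + v.length)
  field_simp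

theorem duality_via_exp_mould :
    (∀ Se : List Ω → K, Symetrel Se → Symetral (mcomp Se (ExpMould Ω K))) ∧
    (∀ E : List Ω → K, Alternel E → Alternal (mcomp E (ExpMould Ω K))) :=
  duality_via_exp_mould_general (symetral_expMould Ω)

end Moulds
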